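/- There exists a doubly periodic binary (2,6,2)-de Bruijn covering array of size 13 × 12. -/

import Mathlib

/-- The `m × n` window of a doubly periodic array at position `(i,j)`. -/
def arrWindow {Alp : Type*} {M N : ℕ} (A : ZMod M × ZMod N → Alp) (m n : ℕ)
    (i : ZMod M) (j : ZMod N) : Fin m → Fin n → Alp :=
  fun a b => A (i + (a.val : ZMod M), j + (b.val : ZMod N))

/-- Hamming distance between two `m × n` matrices: the number of differing entries. -/
def matHammingDist {Alp : Type*} [DecidableEq Alp] {m n : ℕ}
    (X Y : Fin m → Fin n → Alp) : ℕ := ∑ a : Fin m, hammingDist (X a) (Y a)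

/-- `A` is an `(m,n,R)`-de Bruijn covering array of size `M × N`. -/
def IsDBCA {Alp : Type*} [DecidableEq Alp] (M N m n R : ℕ)
    (A : ZMod M × ZMod N → Alp) : Prop :=
  ∀ W : Fin m → Fin n → Alp, ∃ (i : ZMod M) (j : ZMod N),
    matHammingDist W (arrWindow A m n i j) ≤ R

/-!
If each row of an array of width `2n` is a word of length `n` followed by its complement, then the
length-`n` windows of a row are the successive states of the complemented cycling register
`(x₁, …, xₙ) ↦ (x₂, …, xₙ, x₁ + 1)`, an isometry of the Hamming space all of whose cycle lengths
divide `2n`. Hence whether a matrix is covered depends only on its orbit under the register acting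
on all rows at once, and its first row may be taken from a transversal of the register's cycles.
For `n = 6` there are only six cycles, which leaves `6 * 2 ^ 6` matrices to check.
-/

section CyclingRegister

variable {α : Type*} {n : ℕ} (σ : Equiv.Perm α)

/-- The feedback shift register `(x₀, …, xₙ) ↦ (x₁, …, xₙ, σ x₀)` on words of length `n + 1`. For
`σ` the complement of bits it is the complemented cycling register. -/
def cyclingRegister (w : Fin (n + 1) → α) : Fin (n + 1) → α :=
  Fin.snoc (α := fun _ => α) (Fin.tail w) (σ (w 0))

@[simp]
theorem cyclingRegister_castSucc (w : Fin (n + 1) → α) (k : Fin n) :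
    cyclingRegister σ w k.castSucc = w k.succ :=
  Fin.snoc_castSucc (α := fun _ => α) _ _ k

@[simp]
theorem cyclingRegister_last (w : Fin (n + 1) → α) :
    cyclingRegister σ w (Fin.last n) = σ (w 0) :=
  Fin.snoc_last (α := fun _ => α) _ _

theorem cyclingRegister_iterate_apply_zero (w : Fin (n + 1) → α) (k : Fin (n + 1)) :
    ((cyclingRegister σ)^[k] w) 0 = w k := by
  induction k using Fin.induction generalizing w with
  | zero => rfl
  | succ k ih =>
    rw [Fin.val_succ, Function.iterate_succ_apply, ← Fin.val_castSucc, ih,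
      cyclingRegister_castSucc]

theorem cyclingRegister_iterate_length (w : Fin (n + 1) → α) :
    (cyclingRegister σ)^[n + 1] w = σ ∘ w := by
  have head (v : Fin (n + 1) → α) : ((cyclingRegister σ)^[n + 1] v) 0 = σ (v 0) := by
    simpa using cyclingRegister_iterate_apply_zero σ (cyclingRegister σ v) (Fin.last n)
  ext k
  calc (cyclingRegister σ)^[n + 1] w k
      = ((cyclingRegister σ)^[k] ((cyclingRegister σ)^[n + 1] w)) 0 :=
        (cyclingRegister_iterate_apply_zero σ _ k).symm
    _ = ((cyclingRegister σ)^[n + 1] ((cyclingRegister σ)^[k] w)) 0 :=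
        congrFun (Function.Commute.iterate_iterate_self (cyclingRegister σ) k (n + 1) w) 0
    _ = σ (w k) := by rw [head, cyclingRegister_iterate_apply_zero]

theorem cyclingRegister_iterate_length_mul (q : ℕ) (w : Fin (n + 1) → α) :
    (cyclingRegister σ)^[(n + 1) * q] w = (σ ^ q : Equiv.Perm α) ∘ w := by
  induction q generalizing w with
  | zero => rfl
  | succ q ih =>
    rw [Nat.mul_succ, Function.iterate_add_apply, ih, cyclingRegister_iterate_length, pow_succ,
      Equiv.Perm.coe_mul, Function.comp_assoc]

variable [DecidableEq α]

theorem hammingDist_cyclingRegister (u v : Fin (n + 1) → α) :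
    hammingDist (cyclingRegister σ u) (cyclingRegister σ v) = hammingDist u v := by
  simp only [hammingDist, Finset.card_filter]
  rw [Fin.sum_univ_castSucc, Fin.sum_univ_succ]
  simp [add_comm]

theorem matHammingDist_cyclingRegister_iterate {m : ℕ} (k : ℕ) (X Y : Fin m → Fin (n + 1) → α) :
    matHammingDist (fun a => (cyclingRegister σ)^[k] (X a))
      (fun a => (cyclingRegister σ)^[k] (Y a)) = matHammingDist X Y := by
  induction k with
  | zero => rfl
  | succ k ih =>
    simpa only [matHammingDist, Function.iterate_succ_apply', hammingDist_cyclingRegister] using ih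

end CyclingRegister

section RegisterArray

variable {α : Type*} {M N m n R : ℕ} {σ : Equiv.Perm α}

/-- The array whose row `i` is the output sequence of the cycling register started in the state
`s i`. It is meant for `N` a multiple of the period of the register, so that the rows close up. -/
def registerArray (σ : Equiv.Perm α) (s : ZMod M → Fin (n + 1) → α) : ZMod M × ZMod N → α :=
  fun p => ((cyclingRegister σ)^[p.2.val] (s p.1)) 0

theorem arrWindow_registerArray [NeZero N]
    (hN : ∀ w : Fin (n + 1) → α, Function.IsPeriodicPt (cyclingRegister σ) N w)
    (s : ZMod M → Fin (n + 1) → α) (i : ZMod M) (j : ℕ) :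
    arrWindow (registerArray (N := N) σ s) m (n + 1) i j =
      fun a : Fin m => (cyclingRegister σ)^[j] (s (i + (a.val : ZMod M))) := by
  ext a b
  rw [arrWindow, registerArray, ← Nat.cast_add, ZMod.val_natCast, (hN _).iterate_mod_apply,
    Nat.add_comm j, Function.iterate_add_apply, cyclingRegister_iterate_apply_zero]

theorem isDBCA_registerArray [DecidableEq α] [NeZero N]
    (hN : ∀ w : Fin (n + 1) → α, Function.IsPeriodicPt (cyclingRegister σ) N w)
    {s : ZMod M → Fin (n + 1) → α} {T : Set (Fin (n + 1) → α)}
    (hT : ∀ w, ∃ k, (cyclingRegister σ)^[k] w ∈ T)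
    (hcover : ∀ W : Fin (m + 1) → Fin (n + 1) → α, W 0 ∈ T → ∃ (i : ZMod M) (j : ℕ),
      matHammingDist W (fun a => (cyclingRegister σ)^[j] (s (i + (a.val : ZMod M)))) ≤ R) :
    IsDBCA M N (m + 1) (n + 1) R (registerArray σ s) := by
  intro W
  obtain ⟨k, hk⟩ := hT (W 0)
  obtain ⟨i, j, hij⟩ := hcover (fun a => (cyclingRegister σ)^[k] (W a)) hk
  obtain ⟨l, hl⟩ : ∃ l, N ∣ l + k := ⟨(N - 1) * k, k, by
    rw [← Nat.succ_mul, Nat.succ_eq_add_one, Nat.sub_add_cancel NeZero.one_le]⟩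
  have undo (w : Fin (n + 1) → α) : (cyclingRegister σ)^[l] ((cyclingRegister σ)^[k] w) = w := by
    rw [← Function.iterate_add_apply]
    exact (hN w).trans_dvd hl
  refine ⟨i, ((l + j : ℕ) : ZMod N), ?_⟩
  rw [← matHammingDist_cyclingRegister_iterate σ l] at hij
  rw [arrWindow_registerArray hN]
  simpa only [undo, Function.iterate_add_apply] using hij

end RegisterArray

/-- The complement of bits, as a permutation of `ZMod 2`. -/
abbrev bitComplement : Equiv.Perm (ZMod 2) := Equiv.addRight 1

theorem isPeriodicPt_cyclingRegister_bitComplement {n : ℕ} (w : Fin (n + 1) → ZMod 2) :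
    Function.IsPeriodicPt (cyclingRegister bitComplement) ((n + 1) * 2) w := by
  have involutive : bitComplement ^ 2 = 1 := by decide
  rw [Function.IsPeriodicPt, Function.IsFixedPt, cyclingRegister_iterate_length_mul, involutive]
  rfl

/-- Representatives of the six cycles of the complemented cycling register on words of length `6`.
-/
def cycleRepresentatives : List (Fin 6 → ZMod 2) :=
  [![0, 0, 0, 0, 0, 0], ![0, 0, 0, 0, 1, 0], ![0, 0, 0, 1, 0, 0],
    ![0, 0, 0, 1, 1, 0], ![0, 0, 1, 0, 1, 0], ![0, 0, 1, 1, 0, 0]]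

theorem exists_iterate_mem_cycleRepresentatives (w : Fin 6 → ZMod 2) :
    ∃ k, (cyclingRegister bitComplement)^[k] w ∈ cycleRepresentatives := by
  have bounded : ∀ w : Fin 6 → ZMod 2, ∃ k : Fin 12,
      (cyclingRegister bitComplement)^[k] w ∈ cycleRepresentatives := by decide +kernel
  exact (bounded w).imp' Fin.val fun _ => id

/-- The first six columns of the covering array, found by simulated annealing; the other six are
their complements. -/
def seedRows : ZMod 13 → Fin 6 → ZMod 2 :=
  ![![0, 0, 1, 1, 0, 0],
    ![1, 1, 1, 1, 1, 1],
    ![0, 1, 1, 0, 0, 1],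
    ![0, 1, 1, 0, 1, 1],
    ![0, 0, 0, 1, 1, 0],
    ![0, 0, 0, 1, 0, 1],
    ![1, 1, 1, 1, 1, 0],
    ![1, 0, 1, 0, 0, 1],
    ![1, 1, 0, 0, 0, 0],
    ![0, 0, 0, 1, 1, 1],
    ![1, 0, 1, 0, 0, 1],
    ![0, 0, 1, 1, 0, 1],
    ![1, 0, 1, 0, 1, 1]]

theorem exists_hammingDist_add_hammingDist_seedRows_le_two :
    ∀ u ∈ cycleRepresentatives, ∀ v : Fin 6 → ZMod 2, ∃ (i : ZMod 13) (j : Fin 12),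
      hammingDist u ((cyclingRegister bitComplement)^[j] (seedRows i)) +
        hammingDist v ((cyclingRegister bitComplement)^[j] (seedRows (i + 1))) ≤ 2 := by
  decide +kernel

theorem stmt19 : ∃ A : ZMod 13 × ZMod 12 → ZMod 2, IsDBCA 13 12 2 6 2 A := by
  refine ⟨registerArray bitComplement seedRows,
    isDBCA_registerArray (T := {w | w ∈ cycleRepresentatives})
      isPeriodicPt_cyclingRegister_bitComplement exists_iterate_mem_cycleRepresentatives
      fun W hW => ?_⟩
  obtain ⟨i, j, hij⟩ := exists_hammingDist_add_hammingDist_seedRows_le_two (W 0) hW (W 1)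
  exact ⟨i, j, by simpa [matHammingDist] using hij⟩
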